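/- Let L = ℚ(i, √3, √6) ⊆ ℂ, let σ be the field automorphism of L that fixes K = ℚ(i, √6) and sends √3 ↦ −√3, let N(α) = α·σ(α) denote the relative norm from L to K, and let ω = (−1 + i√3)/2 (a primitive cube root of unity, with σ(ω) = ω²). Define 6×6 matrices over L: H_1 = (1/√6)·M_1 where M_1 has rows [1,1,1,1,1,1], [1, −2+√3, −1, 2−√3, −2+√3, 2−√3], [1, 1, −2−√3, 1, 1, −2+√3], [1, −2−√3, 2+√3, −1, 1, −1], [1, 1, −2−√3, −2+√3, 1, 1], [1, 1, 2+√3, −1, −2−√3, −1]; and H_2 = (1/√6)·M_2 where M_2 has rows [1,1,1,1,1,1], [1, 1, −1, −2+√3, −1, 2−√3], [1, 1, 1, 1, −2−√3, −2+√3], [1, −2−√3, 2+√3, −2−√3, 2+√3, −1], [1, 1, −2−√3, 1, 1, −2+√3], [−2−√3, 1, 2+√3, −2−√3, 2+√3, −1]. Let v_1, v_2, v_3, v_4 ∈ L^6 be the columns of (1/√6)·W where W has rows [1,1,1,1], [ω²(2−√3), −ω²(2−√3), −ω(2−√3), ω(2−√3)], [ω, ω, ω², ω²], [−ω, ω, ω²,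 −ω²], [ω², ω², ω, ω], [−1, 1, 1, −1]. Then: the columns of H_1 and the columns of H_2 each form orthonormal bases B_1 and B_2 of L^6 with respect to the σ-Hermitian form; B_0 (the computational basis), B_1 and B_2 are pairwise mutually unbiased (N(⟨b,c⟩) = 1/6 for vectors b, c from distinct bases); and v_1, v_2, v_3, v_4 are pairwise orthogonal unit vectors each mutually unbiased to every vector of B_0 ∪ B_1 ∪ B_2. -/

import Mathlib

open Finset Matrix

noncomputable section

/-- The σ-Hermitian inner product on `L^6`: `⟨u,v⟩ = ∑ j, σ(u_j)·v_j`. -/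
def hermInnerAut {L : Type*} [Field L] (σ : L ≃+* L) (u v : Fin 6 → L) : L :=
  ∑ j, σ (u j) * v j

/-- The relative norm `N(α) = α·σ(α)`. -/
def relNorm {L : Type*} [Field L] (σ : L ≃+* L) (x : L) : L := x * σ x

/-- `ω = (−1 + i√3)/2`, a primitive cube root of unity. -/
def omg {L : Type*} [Field L] (i s3 : L) : L := (-1 + i * s3) / 2

/-- The matrix `M₁` (so that `H₁ = (1/√6)·M₁`). -/
def Mone {L : Type*} [Field L] (s3 : L) : Matrix (Fin 6) (Fin 6) L :=
  !![1, 1, 1, 1, 1, 1;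
     1, -2 + s3, -1, 2 - s3, -2 + s3, 2 - s3;
     1, 1, -2 - s3, 1, 1, -2 + s3;
     1, -2 - s3, 2 + s3, -1, 1, -1;
     1, 1, -2 - s3, -2 + s3, 1, 1;
     1, 1, 2 + s3, -1, -2 - s3, -1]

/-- The matrix `M₂` (so that `H₂ = (1/√6)·M₂`). -/
def Mtwo {L : Type*} [Field L] (s3 : L) : Matrix (Fin 6) (Fin 6) L :=
  !![1, 1, 1, 1, 1, 1;
     1, 1, -1, -2 + s3, -1, 2 - s3;
     1, 1, 1, 1, -2 - s3, -2 + s3;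
     1, -2 - s3, 2 + s3, -2 - s3, 2 + s3, -1;
     1, 1, -2 - s3, 1, 1, -2 + s3;
     -2 - s3, 1, 2 + s3, -2 - s3, 2 + s3, -1]

/-- The `6 × 4` matrix `W` whose columns (scaled by `1/√6`) are the four extra vectors. -/
def Wmat {L : Type*} [Field L] (i s3 : L) : Matrix (Fin 6) (Fin 4) L :=
  !![1, 1, 1, 1;
     (omg i s3) ^ 2 * (2 - s3), -((omg i s3) ^ 2 * (2 - s3)),
       -((omg i s3) * (2 - s3)), (omg i s3) * (2 - s3);
     omg i s3, omg i s3, (omg i s3) ^ 2, (omg i s3) ^ 2;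
     -(omg i s3), omg i s3, (omg i s3) ^ 2, -((omg i s3) ^ 2);
     (omg i s3) ^ 2, (omg i s3) ^ 2, omg i s3, omg i s3;
     -1, 1, 1, -1]

/-- The `j`-th column of `(1/√6)·M` as a vector of `L^6`. -/
def col6 {L : Type*} [Field L] (s6 : L) (M : Matrix (Fin 6) (Fin 6) L) (j : Fin 6) :
    Fin 6 → L := fun r => s6⁻¹ * M r j

/-- The `j`-th column of `(1/√6)·W` as a vector of `L^6`. -/
def col4 {L : Type*} [Field L] (s6 : L) (W : Matrix (Fin 6) (Fin 4) L) (j : Fin 4) :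
    Fin 6 → L := fun r => s6⁻¹ * W r j

/-- The computational basis `B₀` of `L^6`. -/
def compBasis {L : Type*} [Field L] : Fin 6 → Fin 6 → L :=
  fun a r => if r = a then 1 else 0

/-- Computable model of `ℤ[ω, √3]`: `⟨a,b,c,d⟩` stands for `a + bω + (c + dω)√3`. -/
structure Zq where
  a : ℤ
  b : ℤ
  c : ℤ
  d : ℤ
deriving DecidableEq

def Zq.add' (x y : Zq) : Zq := ⟨x.a + y.a, x.b + y.b, x.c + y.c, x.d + y.d⟩

def Zq.mul' (x y : Zq) : Zq :=
  ⟨x.a * y.a - x.b * y.b + 3 * (x.c * y.c - x.d * y.d),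
   x.a * y.b + x.b * y.a - x.b * y.b + 3 * (x.c * y.d + x.d * y.c - x.d * y.d),
   x.a * y.c - x.b * y.d + x.c * y.a - x.d * y.b,
   x.a * y.d + x.b * y.c - x.b * y.d + x.c * y.b + x.d * y.a - x.d * y.b⟩

def Zq.conj (x : Zq) : Zq := ⟨x.a - x.b, -x.b, -x.c + x.d, x.d⟩

def Zq.ip (u v : Fin 6 → Zq) : Zq :=
  ((((((u 0).conj.mul' (v 0)).add' ((u 1).conj.mul' (v 1))).add'
    ((u 2).conj.mul' (v 2))).add' ((u 3).conj.mul' (v 3))).add'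
    ((u 4).conj.mul' (v 4))).add' ((u 5).conj.mul' (v 5))

def Zq.ev {L : Type*} [Field L] (i s3 : L) (x : Zq) : L :=
  x.a + x.b * omg i s3 + (x.c + x.d * omg i s3) * s3

def zA : Matrix (Fin 6) (Fin 6) Zq :=
  let o : Zq := ⟨1, 0, 0, 0⟩
  let n : Zq := ⟨-1, 0, 0, 0⟩
  let p : Zq := ⟨-2, 0, 1, 0⟩
  let p' : Zq := ⟨2, 0, -1, 0⟩
  let m : Zq := ⟨-2, 0, -1, 0⟩
  let m' : Zq := ⟨2, 0, 1, 0⟩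
  !![o, o, o, o, o, o;
     o, p, n, p', p, p';
     o, o, m, o, o, p;
     o, m, m', n, o, n;
     o, o, m, p, o, o;
     o, o, m', n, m, n]

def zB : Matrix (Fin 6) (Fin 6) Zq :=
  let o : Zq := ⟨1, 0, 0, 0⟩
  let n : Zq := ⟨-1, 0, 0, 0⟩
  let p : Zq := ⟨-2, 0, 1, 0⟩
  let p' : Zq := ⟨2, 0, -1, 0⟩
  let m : Zq := ⟨-2, 0, -1, 0⟩
  let m' : Zq := ⟨2, 0, 1, 0⟩
  !![o, o, o, o, o, o;
     o, o, n, p, n, p';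
     o, o, o, o, m, p;
     o, m, m', m, m', n;
     o, o, m, o, o, p;
     m, o, m', m, m', n]

def zW : Matrix (Fin 6) (Fin 4) Zq :=
  let o : Zq := ⟨1, 0, 0, 0⟩
  let n : Zq := ⟨-1, 0, 0, 0⟩
  let w : Zq := ⟨0, 1, 0, 0⟩
  let w2 : Zq := ⟨-1, -1, 0, 0⟩
  let wn : Zq := ⟨0, -1, 0, 0⟩
  let w2n : Zq := ⟨1, 1, 0, 0⟩
  !![o, o, o, o;
     ⟨-2, -2, 1, 1⟩, ⟨2, 2, -1, -1⟩, ⟨0, -2, 0, 1⟩, ⟨0, 2, 0, -1⟩;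
     w, w, w2, w2;
     wn, w, w2, w2n;
     w2, w2, w, w;
     n, o, o, n]

section
variable {L : Type*} [Field L] [CharZero L] {i s3 s6 : L}

lemma omg_sq (hi : i ^ 2 = -1) (h3 : s3 ^ 2 = 3) :
    omg i s3 ^ 2 = -1 - omg i s3 := by
  unfold omg
  field_simp
  linear_combination s3 ^ 2 * hi - h3

lemma ev_add (x y : Zq) : (x.add' y).ev i s3 = x.ev i s3 + y.ev i s3 := by
  simp only [Zq.ev, Zq.add']
  push_cast
  ring

lemma ev_mul (hi : i ^ 2 = -1) (h3 : s3 ^ 2 = 3) (x y : Zq) :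
    (x.mul' y).ev i s3 = x.ev i s3 * y.ev i s3 := by
  have h := omg_sq hi h3
  simp only [Zq.ev, Zq.mul']
  generalize omg i s3 = w at *
  push_cast
  linear_combination (-(x.b * y.b + (x.b * y.d + x.d * y.b) * s3 + 3 * (x.d * y.d) : L)) * h
    - (x.c + x.d * w) * (y.c + y.d * w) * h3

lemma ev_conj (hi : i ^ 2 = -1) (h3 : s3 ^ 2 = 3) (σ : L ≃+* L) (hσi : σ i = i)
    (hσ3 : σ s3 = -s3) (x : Zq) : σ (x.ev i s3) = x.conj.ev i s3 := by
  have hw : σ (omg i s3) = -1 - omg i s3 := by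
    simp only [omg, map_div₀, map_add, map_neg, map_one, map_mul, hσi, hσ3, map_ofNat]
    ring
  simp only [Zq.ev, Zq.conj, map_add, map_mul, map_intCast, hw, hσ3]
  push_cast
  ring

lemma inv_s6 (h6 : s6 ^ 2 = 6) : s6⁻¹ * s6⁻¹ = (6 : L)⁻¹ := by
  rw [← mul_inv, ← sq, h6]

lemma herm_ev (hi : i ^ 2 = -1) (h3 : s3 ^ 2 = 3) (h6 : s6 ^ 2 = 6) (σ : L ≃+* L)
    (hσi : σ i = i) (hσ6 : σ s6 = s6) (hσ3 : σ s3 = -s3) (u v : Fin 6 → Zq) :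
    hermInnerAut σ (fun r => s6⁻¹ * (u r).ev i s3) (fun r => s6⁻¹ * (v r).ev i s3)
      = (6 : L)⁻¹ * (Zq.ip u v).ev i s3 := by
  simp only [hermInnerAut, Fin.sum_univ_six, Zq.ip, ev_add, ev_mul hi h3, map_mul, map_inv₀, hσ6,
    ev_conj hi h3 σ hσi hσ3, ← inv_s6 h6]
  ring

lemma norm_ev (hi : i ^ 2 = -1) (h3 : s3 ^ 2 = 3) (σ : L ≃+* L)
    (hσi : σ i = i) (hσ3 : σ s3 = -s3) (x : Zq) (hx : x.mul' x.conj = ⟨6, 0, 0, 0⟩) :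
    relNorm σ ((6 : L)⁻¹ * x.ev i s3) = (6 : L)⁻¹ := by
  have h : x.ev i s3 * x.conj.ev i s3 = 6 := by
    rw [← ev_mul hi h3, hx]
    simp [Zq.ev]
  simp only [relNorm, map_mul, map_inv₀, map_ofNat, ev_conj hi h3 σ hσi hσ3]
  field_simp
  linear_combination h

lemma norm_one (hi : i ^ 2 = -1) (h3 : s3 ^ 2 = 3) (h6 : s6 ^ 2 = 6) (σ : L ≃+* L)
    (hσi : σ i = i) (hσ6 : σ s6 = s6) (hσ3 : σ s3 = -s3)
    (x : Zq) (hx : x.mul' x.conj = ⟨1, 0, 0, 0⟩) :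
    relNorm σ (s6⁻¹ * x.ev i s3) = (6 : L)⁻¹
    ∧ relNorm σ (σ (s6⁻¹ * x.ev i s3)) = (6 : L)⁻¹ := by
  have h : x.ev i s3 * x.conj.ev i s3 = 1 := by
    rw [← ev_mul hi h3, hx]
    simp [Zq.ev]
  have hcc : x.conj.conj = x := by
    cases x
    simp [Zq.conj]
  simp only [relNorm, map_mul, map_inv₀, hσ6, ev_conj hi h3 σ hσi hσ3, ← inv_s6 h6, hcc]
  constructor <;> linear_combination (s6⁻¹ * s6⁻¹) * h

lemma orth_ev (hi : i ^ 2 = -1) (h3 : s3 ^ 2 = 3) (h6 : s6 ^ 2 = 6) (σ : L ≃+* L)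
    (hσi : σ i = i) (hσ6 : σ s6 = s6) (hσ3 : σ s3 = -s3) (u v : Fin 6 → Zq)
    (P : Prop) [Decidable P] (h : Zq.ip u v = if P then ⟨6, 0, 0, 0⟩ else ⟨0, 0, 0, 0⟩) :
    hermInnerAut σ (fun r => s6⁻¹ * (u r).ev i s3) (fun r => s6⁻¹ * (v r).ev i s3)
      = if P then 1 else 0 := by
  rw [herm_ev hi h3 h6 σ hσi hσ6 hσ3, h]
  split_ifs <;> simp [Zq.ev]

lemma comp_left (σ : L ≃+* L) (a : Fin 6) (v : Fin 6 → L) :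
    hermInnerAut σ (compBasis a) v = v a := by
  simp [hermInnerAut, compBasis, apply_ite σ]

lemma comp_right (σ : L ≃+* L) (a : Fin 6) (v : Fin 6 → L) :
    hermInnerAut σ v (compBasis a) = σ (v a) := by
  simp [hermInnerAut, compBasis]

lemma Mone_ev (j : Fin 6) :
    col6 s6 (Mone s3) j = fun r => s6⁻¹ * (zA r j).ev i s3 := by
  funext r
  unfold col6
  congr 1
  fin_cases r <;> fin_cases j <;> simp [Mone, zA, Zq.ev] <;> ring

lemma Mtwo_ev (j : Fin 6) :
    col6 s6 (Mtwo s3) j = fun r => s6⁻¹ * (zB r j).ev i s3 := by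
  funext r
  unfold col6
  congr 1
  fin_cases r <;> fin_cases j <;> simp [Mtwo, zB, Zq.ev] <;> ring

lemma Wmat_ev (hi : i ^ 2 = -1) (h3 : s3 ^ 2 = 3) (j : Fin 4) :
    col4 s6 (Wmat i s3) j = fun r => s6⁻¹ * (zW r j).ev i s3 := by
  funext r
  unfold col4
  congr 1
  fin_cases r <;> fin_cases j <;> simp [Wmat, zW, Zq.ev, omg_sq hi h3] <;> ring

end

/-- In `L = ℚ(i, √3, √6)` with σ the automorphism fixing
`K = ℚ(i, √6)` and sending `√3 ↦ −√3`, the columns of `H₁ = (1/√6)M₁` and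
`H₂ = (1/√6)M₂` form orthonormal bases `B₁`, `B₂` of `L^6`; `B₀`, `B₁`, `B₂` are pairwise
mutually unbiased (`N(⟨b,c⟩) = 1/6` for vectors from distinct bases); and the four columns
of `(1/√6)W` are pairwise orthogonal unit vectors, each mutually unbiased to every vector
of `B₀ ∪ B₁ ∪ B₂`. -/
theorem stmt13 (L : Type) [Field L] [CharZero L] (i s3 s6 : L)
    (hi : i ^ 2 = -1) (h3 : s3 ^ 2 = 3) (h6 : s6 ^ 2 = 6)
    (hgen : Subfield.closure ({i, s3, s6} : Set L) = ⊤)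
    (σ : L ≃+* L) (hσi : σ i = i) (hσ6 : σ s6 = s6) (hσ3 : σ s3 = -s3) :
    (∀ a b : Fin 6, hermInnerAut σ (col6 s6 (Mone s3) a) (col6 s6 (Mone s3) b)
        = if a = b then 1 else 0)
    ∧ (∀ a b : Fin 6, hermInnerAut σ (col6 s6 (Mtwo s3) a) (col6 s6 (Mtwo s3) b)
        = if a = b then 1 else 0)
    ∧ (∀ a b : Fin 6,
        relNorm σ (hermInnerAut σ (compBasis a) (col6 s6 (Mone s3) b)) = (6 : L)⁻¹)
    ∧ (∀ a b : Fin 6,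
        relNorm σ (hermInnerAut σ (compBasis a) (col6 s6 (Mtwo s3) b)) = (6 : L)⁻¹)
    ∧ (∀ a b : Fin 6,
        relNorm σ (hermInnerAut σ (col6 s6 (Mone s3) a) (col6 s6 (Mtwo s3) b)) = (6 : L)⁻¹)
    ∧ (∀ a b : Fin 4, hermInnerAut σ (col4 s6 (Wmat i s3) a) (col4 s6 (Wmat i s3) b)
        = if a = b then 1 else 0)
    ∧ (∀ (a : Fin 4) (b : Fin 6),
        relNorm σ (hermInnerAut σ (col4 s6 (Wmat i s3) a) (compBasis b)) = (6 : L)⁻¹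
        ∧ relNorm σ (hermInnerAut σ (col4 s6 (Wmat i s3) a) (col6 s6 (Mone s3) b))
            = (6 : L)⁻¹
        ∧ relNorm σ (hermInnerAut σ (col4 s6 (Wmat i s3) a) (col6 s6 (Mtwo s3) b))
            = (6 : L)⁻¹) := by
  have eA : ∀ j, col6 s6 (Mone s3) j = fun r => s6⁻¹ * (zA r j).ev i s3 := Mone_ev
  have eB : ∀ j, col6 s6 (Mtwo s3) j = fun r => s6⁻¹ * (zB r j).ev i s3 := Mtwo_ev
  have eW : ∀ j, col4 s6 (Wmat i s3) j = fun r => s6⁻¹ * (zW r j).ev i s3 := Wmat_ev hi h3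
  simp only [eA, eB, eW, comp_left, comp_right]
  refine ⟨fun a b => ?_, fun a b => ?_, fun a b => ?_, fun a b => ?_, fun a b => ?_,
    fun a b => ?_, fun a b => ⟨?_, ?_, ?_⟩⟩
  · apply orth_ev hi h3 h6 σ hσi hσ6 hσ3 (fun r => zA r a) (fun r => zA r b)
    revert a b
    decide +kernel
  · apply orth_ev hi h3 h6 σ hσi hσ6 hσ3 (fun r => zB r a) (fun r => zB r b)
    revert a b
    decide +kernel
  · refine (norm_one hi h3 h6 σ hσi hσ6 hσ3 (zA a b) ?_).1
    revert a b
    decide +kernel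
  · refine (norm_one hi h3 h6 σ hσi hσ6 hσ3 (zB a b) ?_).1
    revert a b
    decide +kernel
  · rw [herm_ev hi h3 h6 σ hσi hσ6 hσ3 (fun r => zA r a) (fun r => zB r b)]
    apply norm_ev hi h3 σ hσi hσ3
    revert a b
    decide +kernel
  · apply orth_ev hi h3 h6 σ hσi hσ6 hσ3 (fun r => zW r a) (fun r => zW r b)
    revert a b
    decide +kernel
  · refine (norm_one hi h3 h6 σ hσi hσ6 hσ3 (zW b a) ?_).2
    revert a b
    decide +kernel
  · rw [herm_ev hi h3 h6 σ hσi hσ6 hσ3 (fun r => zW r a) (fun r => zA r b)]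
    apply norm_ev hi h3 σ hσi hσ3
    revert a b
    decide +kernel
  · rw [herm_ev hi h3 h6 σ hσi hσ6 hσ3 (fun r => zW r a) (fun r => zB r b)]
    apply norm_ev hi h3 σ hσi hσ3
    revert a b
    decide +kernel

end
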